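/- arXiv:2203.00342 — 4 statements merged into one kernel-verified Lean document; each statement's English description precedes it below -/
import Mathlib

section
/- Let d ≥ 1, let μ > 0 and L > 0, and let f : ℝ^d → ℝ be a differentiable function in RSI⁻(μ) ∩ EB⁺(L). Define the gradient descent iterates x_{i+1} = x_i − (μ/L²)·∇f(x_i) starting from any x₀ ∈ ℝ^d. Then for every i ≥ 0, ‖x_i − x_i^*‖² ≤ (1 − μ²/L²)^i · ‖x₀ − x₀^*‖², where x_i^* denotes the orthogonal projection of x_i onto the set of global minimizers of f. -/
noncomputable section

open RealInnerProductSpace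

/-- The set of global minimizers of `f`. -/
def argminSet {d : ℕ} (f : EuclideanSpace ℝ (Fin d) → ℝ) :
    Set (EuclideanSpace ℝ (Fin d)) := {z | ∀ y, f z ≤ f y}

/-- `p` is the orthogonal projection map onto the set `X` : for each `x`, `p x` is a
nearest point to `x` in `X`. -/
def IsProjOn {d : ℕ} (p : EuclideanSpace ℝ (Fin d) → EuclideanSpace ℝ (Fin d))
    (X : Set (EuclideanSpace ℝ (Fin d))) : Prop :=
  ∀ x, p x ∈ X ∧ ∀ y ∈ X, ‖x - p x‖ ≤ ‖x - y‖

/-- `f` is a differentiable function, whose set of global minimizers is nonempty, closed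
and convex, belonging to `RSI⁻(μ) ∩ EB⁺(L)`. -/
def MemRSIEB {d : ℕ} (μ L : ℝ) (f : EuclideanSpace ℝ (Fin d) → ℝ) : Prop :=
  Differentiable ℝ f ∧ (argminSet f).Nonempty ∧ IsClosed (argminSet f) ∧
    Convex ℝ (argminSet f) ∧
    ∃ p, IsProjOn p (argminSet f) ∧
      (∀ x, μ * ‖x - p x‖ ^ 2 ≤ ⟪gradient f x, x - p x⟫) ∧
      (∀ x, ‖gradient f x‖ ≤ L * ‖x - p x‖)

/-!
The previous projection `p x` is an admissible competitor for the projection of the next iterate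
`x - t • g x`, so the new distance is at most `‖(x - p x) - t • g x‖`. Expanding the square, the
secant inequality controls the cross term and the error bound the quadratic term, which gives the
contraction factor `1 - 2 * t * μ + t ^ 2 * L ^ 2`. The step `t = μ / L ^ 2` minimizes this factor,
with minimum `1 - μ ^ 2 / L ^ 2`.
-/

/-- `p` is a metric projection onto `X`: it sends each point to a nearest point of `X`. As the
nearest point need not be unique, this is a property of a chosen map `p`. -/
def IsMetricProjection {E : Type*} [SeminormedAddCommGroup E] (p : E → E) (X : Set E) : Prop :=
  ∀ x, p x ∈ X ∧ ∀ y ∈ X, ‖x - p x‖ ≤ ‖x - y‖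

/-- The lower restricted secant inequality `RSI⁻(μ)`, for a vector field `g` in place of the
gradient and a map `p` in place of the projection onto the set of minimizers. -/
def LowerRestrictedSecant {E : Type*} [SeminormedAddCommGroup E] [InnerProductSpace ℝ E]
    (μ : ℝ) (g p : E → E) : Prop :=
  ∀ x, μ * ‖x - p x‖ ^ 2 ≤ ⟪g x, x - p x⟫

/-- The upper error bound `EB⁺(L)`, for a vector field `g` in place of the gradient and a map `p`
in place of the projection onto the set of minimizers. -/
def UpperErrorBound {E : Type*} [SeminormedAddCommGroup E] (L : ℝ) (g p : E → E) : Prop :=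
  ∀ x, ‖g x‖ ≤ L * ‖x - p x‖

theorem le_pow_mul_of_nonneg_of_succ_le_mul {u : ℕ → ℝ} {q : ℝ} (hu : ∀ n, 0 ≤ u n)
    (hstep : ∀ n, u (n + 1) ≤ q * u n) (n : ℕ) : u n ≤ q ^ n * u 0 := by
  rcases le_or_gt 0 q with hq | hq
  · exact le_geom hq n fun k _ ↦ hstep k
  · have hzero (m : ℕ) : u m = 0 :=
      le_antisymm (nonpos_of_mul_nonneg_right ((hu (m + 1)).trans (hstep m)) hq) (hu m)
    simp [hzero]

section

variable {E : Type*} [SeminormedAddCommGroup E] [InnerProductSpace ℝ E] {μ L t : ℝ}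

theorem norm_sub_smul_sq_le {v w : E} (ht : 0 ≤ t) (hinner : μ * ‖v‖ ^ 2 ≤ ⟪w, v⟫)
    (hnorm : ‖w‖ ≤ L * ‖v‖) :
    ‖v - t • w‖ ^ 2 ≤ (1 - 2 * t * μ + t ^ 2 * L ^ 2) * ‖v‖ ^ 2 :=
  calc ‖v - t • w‖ ^ 2 = ‖v‖ ^ 2 - 2 * t * ⟪w, v⟫ + t ^ 2 * ‖w‖ ^ 2 := by
        rw [norm_sub_sq_real, real_inner_smul_right, real_inner_comm, norm_smul,
          Real.norm_of_nonneg ht]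
        ring
    _ ≤ ‖v‖ ^ 2 - 2 * t * (μ * ‖v‖ ^ 2) + t ^ 2 * (L * ‖v‖) ^ 2 := by gcongr
    _ = (1 - 2 * t * μ + t ^ 2 * L ^ 2) * ‖v‖ ^ 2 := by ring

variable {X : Set E} {g p : E → E}

theorem IsMetricProjection.norm_sub_sq_step_le (hp : IsMetricProjection p X) (ht : 0 ≤ t)
    (hRSI : LowerRestrictedSecant μ g p) (hEB : UpperErrorBound L g p) (x : E) :
    ‖(x - t • g x) - p (x - t • g x)‖ ^ 2 ≤
      (1 - 2 * t * μ + t ^ 2 * L ^ 2) * ‖x - p x‖ ^ 2 :=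
  calc ‖(x - t • g x) - p (x - t • g x)‖ ^ 2 ≤ ‖(x - t • g x) - p x‖ ^ 2 := by
        gcongr
        exact (hp _).2 (p x) (hp x).1
    _ = ‖(x - p x) - t • g x‖ ^ 2 := by rw [sub_right_comm]
    _ ≤ (1 - 2 * t * μ + t ^ 2 * L ^ 2) * ‖x - p x‖ ^ 2 :=
        norm_sub_smul_sq_le ht (hRSI x) (hEB x)

theorem IsMetricProjection.norm_sub_sq_iterate_le (hp : IsMetricProjection p X) (ht : 0 ≤ t)
    (hRSI : LowerRestrictedSecant μ g p) (hEB : UpperErrorBound L g p) {x : ℕ → E}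
    (hx : ∀ i, x (i + 1) = x i - t • g (x i)) (i : ℕ) :
    ‖x i - p (x i)‖ ^ 2 ≤ (1 - 2 * t * μ + t ^ 2 * L ^ 2) ^ i * ‖x 0 - p (x 0)‖ ^ 2 := by
  refine le_pow_mul_of_nonneg_of_succ_le_mul (u := fun i ↦ ‖x i - p (x i)‖ ^ 2)
    (fun _ ↦ sq_nonneg _) (fun n ↦ ?_) i
  rw [hx n]
  exact hp.norm_sub_sq_step_le ht hRSI hEB (x n)

theorem stmt_0_general (hμ : 0 ≤ μ) (hL : L ≠ 0) (hp : IsMetricProjection p X)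
    (hRSI : LowerRestrictedSecant μ g p) (hEB : UpperErrorBound L g p) {x : ℕ → E}
    (hx : ∀ i, x (i + 1) = x i - (μ / L ^ 2) • g (x i)) (i : ℕ) :
    ‖x i - p (x i)‖ ^ 2 ≤ (1 - μ ^ 2 / L ^ 2) ^ i * ‖x 0 - p (x 0)‖ ^ 2 := by
  have hrate : 1 - 2 * (μ / L ^ 2) * μ + (μ / L ^ 2) ^ 2 * L ^ 2 = 1 - μ ^ 2 / L ^ 2 := by
    field_simp
    ring
  have ht : 0 ≤ μ / L ^ 2 := by positivity
  simpa only [hrate] using hp.norm_sub_sq_iterate_le ht hRSI hEB hx i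

end

/-- Convergence rate of gradient descent with step size `μ/L²` on
`RSI⁻(μ) ∩ EB⁺(L)`. -/
theorem stmt_0 {d : ℕ} (hd : 1 ≤ d) (μ L : ℝ) (hμ : 0 < μ) (hL : 0 < L)
    (f : EuclideanSpace ℝ (Fin d) → ℝ) (hf : Differentiable ℝ f)
    (hne : (argminSet f).Nonempty) (hcl : IsClosed (argminSet f))
    (hcv : Convex ℝ (argminSet f))
    (p : EuclideanSpace ℝ (Fin d) → EuclideanSpace ℝ (Fin d))
    (hp : IsProjOn p (argminSet f))
    (hRSI : ∀ x, μ * ‖x - p x‖ ^ 2 ≤ ⟪gradient f x, x - p x⟫)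
    (hEB : ∀ x, ‖gradient f x‖ ≤ L * ‖x - p x‖)
    (x₀ : EuclideanSpace ℝ (Fin d)) (x : ℕ → EuclideanSpace ℝ (Fin d))
    (hx0 : x 0 = x₀)
    (hx : ∀ i, x (i + 1) = x i - (μ / L ^ 2) • gradient f (x i)) :
    ∀ i, ‖x i - p (x i)‖ ^ 2 ≤ (1 - μ ^ 2 / L ^ 2) ^ i * ‖x 0 - p (x 0)‖ ^ 2 :=
  stmt_0_general hμ.le hL.ne' hp hRSI hEB hx
end
end

section
/- Let d ≥ 1, let μ > 0 and L > 0, and let f : ℝ^d → ℝ be a differentiable function in RSI⁻(μ) ∩ EB⁺(L). For any x ∈ ℝ^d, let y = x − (μ/L²)·∇f(x). Then ‖y − y^*‖² ≤ (1 − μ²/L²)·‖x − x^*‖², where x^* and y^* denote the orthogonal projections of x and y onto the set of global minimizers of f. -/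
noncomputable section

open RealInnerProductSpace

/-!
Put `v = x - x*` and `g = ∇f x`. Expanding the square, RSI⁻ controls the cross term and EB⁺ the
last term of `‖v - t g‖² = ‖v‖² - 2t⟪g, v⟫ + t²‖g‖²`, which is thus at most
`(1 - 2tμ + t²L²)‖v‖²`. The factor is minimal at `t = μ / L²`, where it equals `1 - μ² / L²`, and
`‖y - y*‖ ≤ ‖y - x*‖ = ‖v - t g‖` because `x*` is a minimizer.
-/

section InnerProductSpace

variable {E : Type*} [NormedAddCommGroup E] [InnerProductSpace ℝ E] {μ L : ℝ}

theorem norm_sub_smul_sq_le_of_mul_sq_le_inner {g v : E} {t : ℝ} (ht : 0 ≤ t)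
    (hinner : μ * ‖v‖ ^ 2 ≤ ⟪g, v⟫) (hnorm : ‖g‖ ≤ L * ‖v‖) :
    ‖v - t • g‖ ^ 2 ≤ (1 - 2 * t * μ + t ^ 2 * L ^ 2) * ‖v‖ ^ 2 :=
  calc
    ‖v - t • g‖ ^ 2 = ‖v‖ ^ 2 - 2 * t * ⟪g, v⟫ + t ^ 2 * ‖g‖ ^ 2 := by
      rw [norm_sub_sq_real, real_inner_smul_right, real_inner_comm, norm_smul, mul_pow,
        Real.norm_eq_abs, sq_abs, mul_assoc]
    _ ≤ ‖v‖ ^ 2 - 2 * t * (μ * ‖v‖ ^ 2) + t ^ 2 * (L * ‖v‖) ^ 2 := by gcongr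
    _ = (1 - 2 * t * μ + t ^ 2 * L ^ 2) * ‖v‖ ^ 2 := by ring

theorem stmt_2_general {X : Set E} {x z g : E} (hμ : 0 ≤ μ) (hL : L ≠ 0) (hz : z ∈ X)
    (hRSI : μ * ‖x - z‖ ^ 2 ≤ ⟪g, x - z⟫) (hEB : ‖g‖ ≤ L * ‖x - z‖) :
    Metric.infDist (x - (μ / L ^ 2) • g) X ^ 2 ≤ (1 - μ ^ 2 / L ^ 2) * ‖x - z‖ ^ 2 := by
  set t := μ / L ^ 2 with ht
  have hfactor : 1 - 2 * t * μ + t ^ 2 * L ^ 2 = 1 - μ ^ 2 / L ^ 2 := by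
    rw [ht]
    field_simp
    ring
  calc
    Metric.infDist (x - t • g) X ^ 2 ≤ ‖x - t • g - z‖ ^ 2 := by
      rw [← dist_eq_norm]
      exact pow_le_pow_left₀ Metric.infDist_nonneg (Metric.infDist_le_dist_of_mem hz) 2
    _ = ‖(x - z) - t • g‖ ^ 2 := by rw [sub_right_comm]
    _ ≤ (1 - 2 * t * μ + t ^ 2 * L ^ 2) * ‖x - z‖ ^ 2 :=
      norm_sub_smul_sq_le_of_mul_sq_le_inner (by positivity) hRSI hEB
    _ = (1 - μ ^ 2 / L ^ 2) * ‖x - z‖ ^ 2 := by rw [hfactor]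

end InnerProductSpace

theorem IsProjOn.norm_sub_eq_infDist {d : ℕ}
    {p : EuclideanSpace ℝ (Fin d) → EuclideanSpace ℝ (Fin d)} {X : Set (EuclideanSpace ℝ (Fin d))}
    (hp : IsProjOn p X) (x : EuclideanSpace ℝ (Fin d)) : ‖x - p x‖ = Metric.infDist x X := by
  obtain ⟨hmem, hnearest⟩ := hp x
  refine le_antisymm ((Metric.le_infDist ⟨p x, hmem⟩).2 fun z hz => ?_) ?_
  · exact (hnearest z hz).trans_eq (dist_eq_norm x z).symm
  · exact (Metric.infDist_le_dist_of_mem hmem).trans_eq (dist_eq_norm x (p x))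

/-- One step of gradient descent with step size `μ/L²` contracts the
distance to the minimizer set on `RSI⁻(μ) ∩ EB⁺(L)`. -/
theorem stmt_2 {d : ℕ} (hd : 1 ≤ d) (μ L : ℝ) (hμ : 0 < μ) (hL : 0 < L)
    (f : EuclideanSpace ℝ (Fin d) → ℝ) (hf : Differentiable ℝ f)
    (hne : (argminSet f).Nonempty) (hcl : IsClosed (argminSet f))
    (hcv : Convex ℝ (argminSet f))
    (p : EuclideanSpace ℝ (Fin d) → EuclideanSpace ℝ (Fin d))
    (hp : IsProjOn p (argminSet f))
    (hRSI : ∀ x, μ * ‖x - p x‖ ^ 2 ≤ ⟪gradient f x, x - p x⟫)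
    (hEB : ∀ x, ‖gradient f x‖ ≤ L * ‖x - p x‖)
    (x y : EuclideanSpace ℝ (Fin d))
    (hy : y = x - (μ / L ^ 2) • gradient f x) :
    ‖y - p y‖ ^ 2 ≤ (1 - μ ^ 2 / L ^ 2) * ‖x - p x‖ ^ 2 := by
  rw [hy, hp.norm_sub_eq_infDist]
  exact stmt_2_general hμ.le hL.ne' (hp x).1 (hRSI x) (hEB x)
end
end

section
/- Let d ≥ 1, let μ > 0, and let f : ℝ^d → ℝ be a differentiable function in RSI⁻(μ). Then for every x ∈ ℝ^d, f(x) − f(x^*) ≥ (μ/2)·‖x − x^*‖², where x^* denotes the orthogonal projection of x onto the set of global minimizers of f (so f(x^*) is the global minimum value of f). -/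
noncomputable section

open RealInnerProductSpace

/-!
Every point of the segment from `q = p x` to `x`, other than `x` itself, has `q` as its only nearest
point in `X`: its ball through `q` lies in the ball of `x` through `q`, and by strict convexity of
the norm the two spheres touch only at `q`. So at `q + t (x - q)` the secant inequality reads
`μ t ‖x - q‖² ≤ d/dt f (q + t (x - q))`, and integrating over `t ∈ [0, 1]` gives the factor `μ / 2`.
-/

section NearestPoint

variable {V P : Type*} [NormedAddCommGroup V] [NormedSpace ℝ V] [StrictConvexSpace ℝ V]
  [MetricSpace P] [NormedAddTorsor V P]

theorem eq_of_dist_le_dist_of_dist_lineMap_le {x q r : P} {t : ℝ} (ht : t ∈ Set.Ico (0 : ℝ) 1)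
    (hx : dist x q ≤ dist x r)
    (hz : dist (AffineMap.lineMap q x t) r ≤ dist (AffineMap.lineMap q x t) q) : r = q := by
  obtain ⟨ht₀, ht₁⟩ := ht
  set z : P := AffineMap.lineMap q x t with hz_def
  have hxz : dist x z = (1 - t) * dist x q := by
    rw [dist_right_lineMap, Real.norm_of_nonneg (sub_nonneg.2 ht₁.le), dist_comm q x]
  have hzq : dist z q = t * dist x q := by
    rw [dist_lineMap_left, Real.norm_of_nonneg ht₀, dist_comm q x]
  have htriangle : dist x r ≤ dist x z + dist z r := dist_triangle x z r
  have hxr : dist x r = dist x q := by linarith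
  have hzr : dist z r = t * dist x q := by linarith
  have hz_eq : z = AffineMap.lineMap x r (1 - t) :=
    eq_lineMap_of_dist_eq_mul_of_dist_eq_mul (by rw [hxz, hxr]) (by rw [hzr, hxr, sub_sub_cancel])
  rw [hz_def, ← AffineMap.lineMap_apply_one_sub, AffineMap.lineMap_apply,
    AffineMap.lineMap_apply] at hz_eq
  exact (vsub_left_injective x
    (smul_right_injective V (sub_pos.2 ht₁).ne' (vadd_right_cancel x hz_eq))).symm

end NearestPoint

theorem sub_le_sub_of_hasDerivAt_le {g h g' h' : ℝ → ℝ} {a b : ℝ} (hab : a ≤ b)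
    (hg : ContinuousOn g (Set.Icc a b)) (hh : ContinuousOn h (Set.Icc a b))
    (hg' : ∀ t ∈ Set.Ioo a b, HasDerivAt g (g' t) t)
    (hh' : ∀ t ∈ Set.Ioo a b, HasDerivAt h (h' t) t)
    (hle : ∀ t ∈ Set.Ioo a b, g' t ≤ h' t) : g b - g a ≤ h b - h a := by
  have hmono : MonotoneOn (h - g) (Set.Icc a b) := by
    refine monotoneOn_of_hasDerivWithinAt_nonneg (f' := h' - g') (convex_Icc a b) (hh.sub hg) ?_ ?_
      <;> rw [interior_Icc]
    · exact fun t ht => ((hh' t ht).sub (hg' t ht)).hasDerivWithinAt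
    · exact fun t ht => sub_nonneg.2 (hle t ht)
  have hends : h a - g a ≤ h b - g b :=
    hmono (Set.left_mem_Icc.2 hab) (Set.right_mem_Icc.2 hab) hab
  linarith

section Growth

variable {E : Type*} [NormedAddCommGroup E] [NormedSpace ℝ E] {f : E → ℝ}

theorem half_le_sub_of_mul_le_fderiv_lineMap {q x : E} {c : ℝ}
    (hf : ∀ z ∈ segment ℝ q x, DifferentiableAt ℝ f z)
    (hc : ∀ t ∈ Set.Ioo (0 : ℝ) 1, c * t ≤ fderiv ℝ f (AffineMap.lineMap q x t) (x - q)) :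
    c / 2 ≤ f x - f q := by
  have hsegment (t : ℝ) (ht : t ∈ Set.Icc (0 : ℝ) 1) :
      HasDerivAt (fun s => f (AffineMap.lineMap q x s))
        (fderiv ℝ f (AffineMap.lineMap q x t) (x - q)) t :=
    (hf _ (lineMap_mem_segment ℝ q x ht)).hasFDerivAt.comp_hasDerivAt t AffineMap.hasDerivAt_lineMap
  have hparabola (t : ℝ) : HasDerivAt (fun s => c / 2 * s ^ 2) (c * t) t :=
    ((hasDerivAt_pow 2 t).const_mul (c / 2)).congr_deriv (by norm_num; ring)
  simpa using sub_le_sub_of_hasDerivAt_le zero_le_one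
    (fun t _ => (hparabola t).continuousAt.continuousWithinAt)
    (fun t ht => (hsegment t ht).continuousAt.continuousWithinAt)
    (fun t _ => hparabola t) (fun t ht => hsegment t (Set.Ioo_subset_Icc_self ht)) hc

theorem stmt_4_general [StrictConvexSpace ℝ E] {μ : ℝ} (hf : Differentiable ℝ f) {X : Set E}
    {p : E → E} (hp : ∀ x, p x ∈ X ∧ ∀ y ∈ X, ‖x - p x‖ ≤ ‖x - y‖)
    (hRSI : ∀ x, μ * ‖x - p x‖ ^ 2 ≤ fderiv ℝ f x (x - p x)) (x : E) :
    μ / 2 * ‖x - p x‖ ^ 2 ≤ f x - f (p x) := by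
  suffices μ * ‖x - p x‖ ^ 2 / 2 ≤ f x - f (p x) by linarith
  refine half_le_sub_of_mul_le_fderiv_lineMap (fun z _ => hf z) fun t ht => ?_
  set z : E := AffineMap.lineMap (p x) x t
  have hpz : p z = p x := by
    refine eq_of_dist_le_dist_of_dist_lineMap_le (x := x) (Set.Ioo_subset_Ico_self ht) ?_ ?_
    · simpa only [dist_eq_norm] using (hp x).2 _ (hp z).1
    · simpa only [dist_eq_norm] using (hp z).2 _ (hp x).1
  have hz_sub : z - p x = t • (x - p x) := AffineMap.lineMap_vsub_left (p x) x t
  have hRSIz := hRSI z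
  rw [hpz, hz_sub, norm_smul, Real.norm_of_nonneg ht.1.le, map_smul, smul_eq_mul] at hRSIz
  refine le_of_mul_le_mul_left ?_ ht.1
  calc t * (μ * ‖x - p x‖ ^ 2 * t) = μ * (t * ‖x - p x‖) ^ 2 := by ring
    _ ≤ t * fderiv ℝ f z (x - p x) := hRSIz

end Growth

/-- A function satisfying `RSI⁻(μ)` grows at least quadratically with
the distance to its minimizer set. -/
theorem stmt_4 {d : ℕ} (hd : 1 ≤ d) (μ : ℝ) (hμ : 0 < μ)
    (f : EuclideanSpace ℝ (Fin d) → ℝ) (hf : Differentiable ℝ f)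
    (hne : (argminSet f).Nonempty) (hcl : IsClosed (argminSet f))
    (hcv : Convex ℝ (argminSet f))
    (p : EuclideanSpace ℝ (Fin d) → EuclideanSpace ℝ (Fin d))
    (hp : IsProjOn p (argminSet f))
    (hRSI : ∀ x, μ * ‖x - p x‖ ^ 2 ≤ ⟪gradient f x, x - p x⟫) :
    ∀ x, μ / 2 * ‖x - p x‖ ^ 2 ≤ f x - f (p x) :=
  stmt_4_general hf hp fun x => (hRSI x).trans_eq inner_gradient_left
end
end

section
/- Interpolation conditions: let d ≥ 1, n ≥ 0, and let (x_i, g_i) for i = 0, …, n be pairs in ℝ^d × ℝ^d with the points x_i pairwise distinct. Then for all μ > 0 and L > 0, the following are equivalent: (a) there exists a differentiable function f : ℝ^d → ℝ in RSI⁻(μ) ∩ EB⁺(L) such that ∇f(x_i) = g_i for all i; (b) there exists a nonempty closed convex set X* ⊆ ℝ^d such that for all i, ‖g_i‖ ≤ L‖x_i − x_i^*‖ and ⟨g_i, x_i − x_i^*⟩ ≥ μ‖x_i − x_i^*‖², where x_i^* is the orthogonal projection of x_i onto X*. -/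
noncomputable section

open RealInnerProductSpace

/-!
Necessity is immediate with `X` the set of minimizers. For sufficiency, take `μ < L` and `L > 0`,
and choose `c > 0` with `μ < c < L`. The function `q = c / 2 * dist(·, X)²` has gradient
`c • (z - z^*)`, so it satisfies both inequalities with slack away from `X`. Near each `x i` outside
`X` one adds to `q` a bump `ψ(‖z - x i‖ / δ) ⟪v, z - x i⟫` with `v = g i - c • (x i - (x i)^*)`,
where `ψ` goes from `1` to `0` so slowly that the gradient of the sum stays within `O(κ (1 - ψ))`
of the segment from `g i` to `c • (x i - (x i)^*)`. The prescribed `g i` may satisfy the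
inequalities without any slack, but moving a fraction `1 - ψ` along this segment gains slack
proportional to `1 - ψ`, which absorbs the error for small `κ`. Since the bumps live in disjoint
balls, they can be added independently. If `L < μ` or `L ≤ 0`, then every `g i` vanishes and `f = 0`
works; if `μ = L`, then `g i` is forced to be the gradient of `q` with `c = L`.
-/

open Filter Topology Set
open scoped Function Gradient

section NearestPoint

variable {E : Type*} [NormedAddCommGroup E] {p : E → E} {X : Set E}

/-- `p` sends each point of a normed space to a nearest point of `X`; for a closed convex set in a
Hilbert space this is the orthogonal projection. On `EuclideanSpace ℝ (Fin d)` this is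
`IsProjOn`. -/
def IsNearestPointMap (p : E → E) (X : Set E) : Prop :=
  ∀ x, p x ∈ X ∧ ∀ y ∈ X, ‖x - p x‖ ≤ ‖x - y‖

namespace IsNearestPointMap

lemma norm_sub_eq_zero_iff (hp : IsNearestPointMap p X) {x : E} : ‖x - p x‖ = 0 ↔ x ∈ X := by
  refine ⟨fun h => ?_, fun hx => ?_⟩
  · rw [sub_eq_zero.1 (norm_eq_zero.1 h)]
    exact (hp x).1
  · exact le_antisymm (by simpa using (hp x).2 x hx) (norm_nonneg _)

variable [InnerProductSpace ℝ E]

lemma inner_sub_sub_nonpos (hp : IsNearestPointMap p X) (hX : Convex ℝ X) (x : E) {w : E}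
    (hw : w ∈ X) : ⟪x - p x, w - p x⟫ ≤ 0 := by
  have hmin : IsMinOn (fun y => ‖x - y‖) X (p x) := fun y hy => (hp x).2 y hy
  exact (norm_eq_iInf_iff_real_inner_le_zero hX (hp x).1).1 (hmin.iInf_eq (hp x).1).symm w hw

lemma norm_sub_sub_sub_sq_le_inner (hp : IsNearestPointMap p X) (hX : Convex ℝ X) (x y : E) :
    ‖(x - p x) - (y - p y)‖ ^ 2 ≤ ⟪(x - p x) - (y - p y), x - y⟫ := by
  have hxy := hp.inner_sub_sub_nonpos hX x (hp y).1
  have hyx := hp.inner_sub_sub_nonpos hX y (hp x).1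
  have hsplit : ⟪(x - p x) - (y - p y), x - y⟫ = ‖(x - p x) - (y - p y)‖ ^ 2
      - ⟪x - p x, p y - p x⟫ - ⟪y - p y, p x - p y⟫ := by
    rw [← real_inner_self_eq_norm_sq]
    simp only [inner_sub_left, inner_sub_right]
    ring
  linarith

lemma norm_sub_sub_sub_le (hp : IsNearestPointMap p X) (hX : Convex ℝ X) (x y : E) :
    ‖(x - p x) - (y - p y)‖ ≤ ‖x - y‖ := by
  have hfirm := (hp.norm_sub_sub_sub_sq_le_inner hX x y).trans (real_inner_le_norm _ _)
  rw [sq] at hfirm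
  rcases (norm_nonneg ((x - p x) - (y - p y))).eq_or_lt with h | h
  · exact h ▸ norm_nonneg _
  · exact le_of_mul_le_mul_left hfirm h

lemma hasGradientAt_norm_sub_sq [CompleteSpace E] (hp : IsNearestPointMap p X)
    (hX : Convex ℝ X) (x : E) :
    HasGradientAt (fun y => ‖y - p y‖ ^ 2) ((2 : ℝ) • (x - p x)) x := by
  rw [hasGradientAt_iff_isLittleO]
  refine (Asymptotics.IsBigO.of_bound 1 (Eventually.of_forall fun y => ?_)).trans_isLittleO
    (Asymptotics.isLittleO_pow_sub_sub x one_lt_two)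
  have hupper : ‖y - p y‖ ^ 2 ≤ ‖x - p x‖ ^ 2 + 2 * ⟪x - p x, y - x⟫ + ‖y - x‖ ^ 2 := by
    rw [← norm_add_sq_real, show x - p x + (y - x) = y - p x by abel]
    gcongr
    exact (hp y).2 _ (hp x).1
  have hlower : ‖x - p x‖ ^ 2 ≤ ‖y - p y‖ ^ 2 - 2 * ⟪y - p y, y - x⟫ + ‖y - x‖ ^ 2 := by
    rw [← norm_sub_sq_real, show y - p y - (y - x) = x - p y by abel]
    gcongr
    exact (hp x).2 _ (hp y).1
  have hmono : ⟪x - p x, y - x⟫ ≤ ⟪y - p y, y - x⟫ := by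
    rw [← sub_nonneg, ← inner_sub_left]
    exact (sq_nonneg _).trans (hp.norm_sub_sub_sub_sq_le_inner hX y x)
  rw [real_inner_smul_left, norm_pow, norm_norm, one_mul, Real.norm_eq_abs, abs_le]
  constructor <;> linarith

end IsNearestPointMap

end NearestPoint

section SlowCutoff

/-- The radial profile `(1 - t ^ s)₊²`, equal to `1` at `t = 0` and to `0` for `t ≥ 1`. As `s → 0`
it varies slowly in the sense that `t |ψ'(t)| ≤ 2 s (1 - ψ t)`. -/
def slowCutoff (s t : ℝ) : ℝ := max (1 - t ^ s) 0 ^ 2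

variable {s t : ℝ}

lemma slowCutoff_zero (hs : 0 < s) : slowCutoff s 0 = 1 := by
  simp [slowCutoff, Real.zero_rpow hs.ne']

lemma slowCutoff_eq_zero (hs : 0 ≤ s) (ht : 1 ≤ t) : slowCutoff s t = 0 := by
  simp [slowCutoff, Real.one_le_rpow ht hs]

lemma slowCutoff_nonneg : 0 ≤ slowCutoff s t := sq_nonneg _

lemma slowCutoff_le_one (ht : 0 ≤ t) : slowCutoff s t ≤ 1 :=
  pow_le_one₀ (le_max_right _ _)
    (max_le (sub_le_self _ (Real.rpow_nonneg ht s)) zero_le_one)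

lemma continuous_slowCutoff (hs : 0 ≤ s) : Continuous (slowCutoff s) := by
  have hpow : Continuous fun t : ℝ => t ^ s := continuous_id.rpow_const fun _ => Or.inr hs
  exact ((continuous_const.sub hpow).max continuous_const).pow 2

lemma le_one_sub_slowCutoff (hs : s ≤ 1) (ht₀ : 0 ≤ t) (ht₁ : t ≤ 1) :
    t ≤ 1 - slowCutoff s t := by
  have hpow : t ≤ t ^ s := Real.self_le_rpow_of_le_one ht₀ ht₁ hs
  have hle : max (1 - t ^ s) 0 ≤ 1 - t := max_le (by linarith) (by linarith)
  have hsq : slowCutoff s t ≤ (1 - t) ^ 2 := pow_le_pow_left₀ (le_max_right _ _) hle 2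
  nlinarith

-- `(max t 0) ^ 2` is the squared distance from `t` to `Iic 0`.
lemma hasDerivAt_max_zero_sq (t : ℝ) :
    HasDerivAt (fun u : ℝ => max u 0 ^ 2) (2 * max t 0) t := by
  have hsub : ∀ u : ℝ, u - min u 0 = max u 0 := fun u => by linarith [max_add_min u 0]
  have hp : IsNearestPointMap (fun u : ℝ => min u 0) (Iic 0) := fun u => by
    refine ⟨mem_Iic.2 (min_le_right _ _), fun y hy => ?_⟩
    rw [hsub, Real.norm_eq_abs, Real.norm_eq_abs, abs_of_nonneg (le_max_right _ _)]
    exact max_le ((le_sub_self_iff u).2 hy |>.trans (le_abs_self _)) (abs_nonneg _)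
  simpa [hsub] using (hp.hasGradientAt_norm_sub_sq (convex_Iic 0) t).hasDerivAt'

lemma hasDerivAt_slowCutoff (ht : 0 < t) :
    HasDerivAt (slowCutoff s) (-(2 * s * max (1 - t ^ s) 0 * t ^ (s - 1))) t := by
  have hpow := (Real.hasDerivAt_rpow_const (p := s) (Or.inl ht.ne')).const_sub 1
  have hcomp : HasDerivAt (slowCutoff s) (2 * max (1 - t ^ s) 0 * -(s * t ^ (s - 1))) t :=
    HasDerivAt.comp (h₂ := fun u => max u 0 ^ 2) t (hasDerivAt_max_zero_sq _) hpow
  exact hcomp.congr_deriv (by ring)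

lemma mul_abs_deriv_slowCutoff_le (hs : 0 ≤ s) (ht : 0 < t) :
    t * |deriv (slowCutoff s) t| ≤ 2 * s * (1 - slowCutoff s t) := by
  have hpow : t * t ^ (s - 1) = t ^ s := by rw [Real.rpow_sub_one ht.ne']; field_simp
  have hpos : 0 ≤ t ^ s := Real.rpow_nonneg ht.le s
  have hprofile : max (1 - t ^ s) 0 * t ^ s ≤ 1 - slowCutoff s t := by
    unfold slowCutoff
    rcases max_cases (1 - t ^ s) 0 with ⟨h, _⟩ | ⟨h, _⟩ <;> rw [h] <;> nlinarith
  have habs : |deriv (slowCutoff s) t| = 2 * s * max (1 - t ^ s) 0 * t ^ (s - 1) := by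
    rw [(hasDerivAt_slowCutoff ht).deriv, abs_neg, abs_of_nonneg (by positivity)]
  calc t * |deriv (slowCutoff s) t| = 2 * s * (max (1 - t ^ s) 0 * t ^ s) := by
        rw [habs, ← hpow]; ring
    _ ≤ 2 * s * (1 - slowCutoff s t) := by gcongr

end SlowCutoff

section Gradient

variable {E : Type*} [NormedAddCommGroup E] [InnerProductSpace ℝ E] [CompleteSpace E]
  {f₁ f₂ φ : E → ℝ} {a v w w₁ w₂ x : E}

lemma hasGradientAt_add (h₁ : HasGradientAt f₁ w₁ x) (h₂ : HasGradientAt f₂ w₂ x) :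
    HasGradientAt (fun y => f₁ y + f₂ y) (w₁ + w₂) x := by
  rw [hasGradientAt_iff_hasFDerivAt, map_add]
  exact h₁.hasFDerivAt.add h₂.hasFDerivAt

lemma hasGradientAt_const_mul (c : ℝ) (h : HasGradientAt φ w x) :
    HasGradientAt (fun y => c * φ y) (c • w) x := by
  rw [hasGradientAt_iff_hasFDerivAt, map_smul]
  exact h.hasFDerivAt.const_mul c

lemma hasGradientAt_norm_sub (hx : x ≠ a) :
    HasGradientAt (fun y => ‖y - a‖) (‖x - a‖⁻¹ • (x - a)) x := by
  have hne : ‖x - a‖ ≠ 0 := norm_ne_zero_iff.2 (sub_ne_zero.2 hx)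
  have hsqrt := (((hasFDerivAt_id x).sub_const a).norm_sq).sqrt (pow_ne_zero 2 hne)
  simp only [id, Real.sqrt_sq (norm_nonneg _)] at hsqrt
  rw [hasGradientAt_iff_hasFDerivAt]
  refine hsqrt.congr_fderiv ?_
  ext y
  simp only [one_div, mul_inv_rev, map_sub, ContinuousLinearMap.comp_id, smul_apply, sub_apply,
    coe_innerSL_apply, nsmul_eq_mul, Nat.cast_ofNat, smul_eq_mul, map_smul,
    InnerProductSpace.toDual_apply_apply]
  field_simp

lemma hasGradientAt_mul_inner_sub (hφ : HasGradientAt φ w x) :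
    HasGradientAt (fun y => φ y * ⟪v, y - a⟫) (φ x • v + ⟪v, x - a⟫ • w) x := by
  have hinner : HasFDerivAt (fun y => ⟪v, y - a⟫) (innerSL ℝ v) x :=
    (innerSL ℝ v).hasFDerivAt.comp x ((hasFDerivAt_id x).sub_const a)
  rw [hasGradientAt_iff_hasFDerivAt, map_add, map_smul, map_smul]
  exact hφ.hasFDerivAt.mul hinner

lemma hasGradientAt_mul_inner_sub_self (hφ : ContinuousAt φ a) :
    HasGradientAt (fun y => φ y * ⟪v, y - a⟫) (φ a • v) a := by
  rw [hasGradientAt_iff_isLittleO]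
  have hinner : (fun y => ⟪v, y - a⟫) =O[𝓝 a] fun y => ‖y - a‖ :=
    Asymptotics.IsBigO.of_bound ‖v‖ (Eventually.of_forall fun y => by
      simpa using norm_inner_le_norm (𝕜 := ℝ) v (y - a))
  have hφ₀ : (fun y => φ y - φ a) =o[𝓝 a] fun _ => (1 : ℝ) :=
    (Asymptotics.isLittleO_one_iff ℝ).2 (tendsto_sub_nhds_zero_iff.2 hφ)
  refine ((hφ₀.mul_isBigO hinner).congr (fun y => ?_) fun y => one_mul _).of_norm_right
  simp only [sub_self, inner_zero_right, mul_zero, real_inner_smul_left]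
  ring

end Gradient

section Bump

variable {E : Type*} [NormedAddCommGroup E] [InnerProductSpace ℝ E]

/-- The function `y ↦ ψ(‖y - a‖ / δ) ⟪v, y - a⟫` with `ψ = slowCutoff s`: a localization, to the
ball of radius `δ` about `a`, of the linear function with gradient `v`. -/
def linearBump (s δ : ℝ) (a v y : E) : ℝ := slowCutoff s (‖y - a‖ / δ) * ⟪v, y - a⟫

variable {s δ κ : ℝ} {a x : E} (v : E)

lemma linearBump_eq_zero (hs : 0 ≤ s) (hδ : 0 < δ) (hx : δ ≤ ‖x - a‖) :
    linearBump s δ a v x = 0 := by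
  rw [linearBump, slowCutoff_eq_zero hs ((one_le_div hδ).2 hx), zero_mul]

lemma abs_linearBump_le (hs : 0 ≤ s) (hδ : 0 < δ) (x : E) :
    |linearBump s δ a v x| ≤ ‖v‖ * δ := by
  rcases le_total δ ‖x - a‖ with hx | hx
  · rw [linearBump_eq_zero v hs hδ hx, abs_zero]
    positivity
  · rw [linearBump, abs_mul, abs_of_nonneg slowCutoff_nonneg]
    calc slowCutoff s (‖x - a‖ / δ) * |⟪v, x - a⟫| ≤ 1 * (‖v‖ * ‖x - a‖) := by
          gcongr
          · exact slowCutoff_le_one (by positivity)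
          · exact abs_real_inner_le_norm v (x - a)
      _ ≤ ‖v‖ * δ := by rw [one_mul]; gcongr

variable [CompleteSpace E]

lemma hasGradientAt_linearBump_self (hs : 0 < s) :
    HasGradientAt (linearBump s δ a v) v a := by
  have hcont : Continuous fun y => slowCutoff s (‖y - a‖ / δ) :=
    (continuous_slowCutoff hs.le).comp (by fun_prop)
  have h := hasGradientAt_mul_inner_sub_self (v := v) (a := a) hcont.continuousAt
  rwa [sub_self, norm_zero, zero_div, slowCutoff_zero hs, one_smul] at h

lemma hasGradientAt_linearBump (hδ : 0 < δ) (hx : x ≠ a) :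
    HasGradientAt (linearBump s δ a v)
      (slowCutoff s (‖x - a‖ / δ) • v
        + (⟪v, x - a⟫ * (deriv (slowCutoff s) (‖x - a‖ / δ) / (δ * ‖x - a‖))) • (x - a)) x := by
  have hr : 0 < ‖x - a‖ := norm_pos_iff.2 (sub_ne_zero.2 hx)
  have hψ := (hasDerivAt_slowCutoff (s := s) (div_pos hr hδ)).differentiableAt.hasDerivAt
  have hnorm := (hasGradientAt_norm_sub hx).hasFDerivAt.mul_const δ⁻¹
  have hradial : HasGradientAt (fun y => slowCutoff s (‖y - a‖ / δ))
      ((deriv (slowCutoff s) (‖x - a‖ / δ) / (δ * ‖x - a‖)) • (x - a)) x := by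
    rw [hasGradientAt_iff_hasFDerivAt]
    refine (hψ.comp_hasFDerivAt x hnorm).congr_fderiv ?_
    rw [← map_smul, ← map_smul, smul_smul, smul_smul]
    congr 2
    field_simp
  have h := hasGradientAt_mul_inner_sub (v := v) (a := a) hradial
  rwa [smul_smul] at h

lemma differentiable_linearBump (hs : 0 < s) (hδ : 0 < δ) :
    Differentiable ℝ (linearBump s δ a v) := fun x => by
  rcases eq_or_ne x a with rfl | hx
  · exact (hasGradientAt_linearBump_self v hs).differentiableAt
  · exact (hasGradientAt_linearBump v hδ hx).differentiableAt

lemma norm_gradient_linearBump_sub_le (hs : 0 < s) (hδ : 0 < δ) (x : E) :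
    ‖∇ (linearBump s δ a v) x - slowCutoff s (‖x - a‖ / δ) • v‖
      ≤ 2 * s * ‖v‖ * (1 - slowCutoff s (‖x - a‖ / δ)) := by
  rcases eq_or_ne x a with rfl | hx
  · simp [(hasGradientAt_linearBump_self v hs).gradient, slowCutoff_zero hs]
  have hr : 0 < ‖x - a‖ := norm_pos_iff.2 (sub_ne_zero.2 hx)
  rw [(hasGradientAt_linearBump v hδ hx).gradient, add_sub_cancel_left, norm_smul, norm_mul,
    norm_div, norm_mul, norm_norm, Real.norm_of_nonneg hδ.le]
  calc ‖⟪v, x - a⟫‖ * (‖deriv (slowCutoff s) (‖x - a‖ / δ)‖ / (δ * ‖x - a‖)) * ‖x - a‖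
      ≤ ‖v‖ * ‖x - a‖ * (‖deriv (slowCutoff s) (‖x - a‖ / δ)‖ / (δ * ‖x - a‖)) * ‖x - a‖ := by
        gcongr
        exact norm_inner_le_norm v (x - a)
    _ = ‖v‖ * (‖x - a‖ / δ * |deriv (slowCutoff s) (‖x - a‖ / δ)|) := by
        rw [Real.norm_eq_abs]
        field_simp
    _ ≤ ‖v‖ * (2 * s * (1 - slowCutoff s (‖x - a‖ / δ))) := by
        exact mul_le_mul_of_nonneg_left (mul_abs_deriv_slowCutoff_le hs.le (div_pos hr hδ))
          (norm_nonneg v)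
    _ = 2 * s * ‖v‖ * (1 - slowCutoff s (‖x - a‖ / δ)) := by ring

-- The error is proportional to `1 - φ`, hence vanishes where the full vector `v` is in force:
-- it can be absorbed by constraints which `v` itself satisfies without any slack.
lemma exists_bump_gradient_eq (hκ : 0 < κ) (a : E) :
    ∃ H : E → ℝ, Differentiable ℝ H ∧ ∇ H a = v ∧ (∀ x, κ ≤ ‖x - a‖ → H x = 0) ∧
      ∀ x, ‖x - a‖ ≤ κ → |H x| ≤ κ ∧ ∃ φ ∈ Icc (0 : ℝ) 1,
        ‖x - a‖ ≤ κ * (1 - φ) ∧ ‖∇ H x - φ • v‖ ≤ κ * (1 - φ) := by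
  have hv : 0 < ‖v‖ + 1 := by positivity
  obtain ⟨δ, hδ, hδκ, hvδ⟩ : ∃ δ, 0 < δ ∧ δ ≤ κ ∧ ‖v‖ * δ ≤ κ := by
    refine ⟨κ / (‖v‖ + 1), by positivity, div_le_self hκ.le (by simp), ?_⟩
    rw [mul_div_assoc', div_le_iff₀ hv]
    nlinarith
  obtain ⟨s, hs, hs₁, hvs⟩ : ∃ s : ℝ, 0 < s ∧ s ≤ 1 ∧ 2 * s * ‖v‖ ≤ κ := by
    refine ⟨min 1 (κ / (2 * (‖v‖ + 1))), by positivity, min_le_left _ _, ?_⟩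
    have h := (le_div_iff₀ (by positivity)).1 (min_le_right 1 (κ / (2 * (‖v‖ + 1))))
    have hpos : 0 < min 1 (κ / (2 * (‖v‖ + 1))) := by positivity
    linarith
  refine ⟨linearBump s δ a v, differentiable_linearBump v hs hδ,
    (hasGradientAt_linearBump_self v hs).gradient,
    fun x hx => linearBump_eq_zero v hs.le hδ (hδκ.trans hx),
    fun x hx => ⟨(abs_linearBump_le v hs.le hδ x).trans hvδ, slowCutoff s (‖x - a‖ / δ),
      ⟨slowCutoff_nonneg, slowCutoff_le_one (by positivity)⟩, ?_, ?_⟩⟩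
  · rcases le_total ‖x - a‖ δ with hxδ | hxδ
    · have hle := le_one_sub_slowCutoff hs₁ (by positivity) ((div_le_one hδ).2 hxδ)
      calc ‖x - a‖ = δ * (‖x - a‖ / δ) := (mul_div_cancel₀ _ hδ.ne').symm
        _ ≤ κ * (1 - slowCutoff s (‖x - a‖ / δ)) :=
          mul_le_mul hδκ hle (by positivity) hκ.le
    · rwa [slowCutoff_eq_zero hs.le ((one_le_div hδ).2 hxδ), sub_zero, mul_one]
  · have hφ : 0 ≤ 1 - slowCutoff s (‖x - a‖ / δ) :=
      sub_nonneg.2 (slowCutoff_le_one (by positivity))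
    exact (norm_gradient_linearBump_sub_le v hs hδ x).trans (mul_le_mul_of_nonneg_right hvs hφ)

end Bump

section AdmissibleGradients

variable {E : Type*} [NormedAddCommGroup E] [InnerProductSpace ℝ E]

/-- The gradients which `RSI⁻(μ)` and `EB⁺(L)` allow at a point `x` whose displacement
`x - x^*` from its projection is `m`. -/
def admissibleGradients (μ L : ℝ) (m : E) : Set E :=
  {g | ‖g‖ ≤ L * ‖m‖ ∧ μ * ‖m‖ ^ 2 ≤ ⟪g, m⟫}

variable {μ L c ρ r t : ℝ} {g h m n : E}

lemma smul_mem_admissibleGradients (hc : 0 ≤ c) (hμc : μ ≤ c) (hcL : c ≤ L) (m : E) :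
    c • m ∈ admissibleGradients μ L m := by
  refine ⟨?_, ?_⟩
  · rw [norm_smul, Real.norm_of_nonneg hc]
    gcongr
  · rw [real_inner_smul_left, real_inner_self_eq_norm_sq]
    gcongr

lemma eq_zero_of_mem_admissibleGradients (hg : g ∈ admissibleGradients μ L m)
    (h : L ≤ 0 ∨ L < μ) : g = 0 := by
  obtain ⟨hEB, hRSI⟩ := hg
  refine norm_le_zero_iff.1 ?_
  rcases h with hL | hLμ
  · exact hEB.trans (mul_nonpos_of_nonpos_of_nonneg hL (norm_nonneg m))
  · have hle : μ * ‖m‖ ^ 2 ≤ L * ‖m‖ ^ 2 := calc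
      μ * ‖m‖ ^ 2 ≤ ‖g‖ * ‖m‖ := hRSI.trans (real_inner_le_norm g m)
      _ ≤ L * ‖m‖ * ‖m‖ := by gcongr
      _ = L * ‖m‖ ^ 2 := by ring
    have hm : ‖m‖ = 0 := by
      by_contra hm
      have : 0 < ‖m‖ ^ 2 := by positivity
      nlinarith
    simpa [hm] using hEB

lemma eq_smul_of_mem_admissibleGradients (hL : 0 ≤ L) (hg : g ∈ admissibleGradients L L m) :
    g = L • m := by
  obtain ⟨hEB, hRSI⟩ := hg
  have hsq : ‖g - L • m‖ ^ 2 = ‖g‖ ^ 2 - 2 * L * ⟪g, m⟫ + (L * ‖m‖) ^ 2 := by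
    rw [norm_sub_sq_real, inner_smul_right, norm_smul, Real.norm_of_nonneg hL]
    ring
  have hg_sq : ‖g‖ ^ 2 ≤ (L * ‖m‖) ^ 2 := by gcongr
  have hle : ‖g - L • m‖ ^ 2 ≤ 0 := by nlinarith
  rw [← sub_eq_zero, ← norm_eq_zero, ← sq_eq_zero_iff]
  exact le_antisymm hle (sq_nonneg _)

lemma smul_add_smul_mem_admissibleGradients (hg : g ∈ admissibleGradients μ L m) (hc : 0 ≤ c)
    (hμc : μ + ρ ≤ c) (hcL : c + ρ ≤ L) (ht : t ∈ Icc (0 : ℝ) 1) :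
    t • g + (1 - t) • c • m
      ∈ admissibleGradients (μ + (1 - t) * ρ) (L - (1 - t) * ρ) m := by
  obtain ⟨hEB, hRSI⟩ := hg
  obtain ⟨ht₀, ht₁⟩ := ht
  replace ht₁ : 0 ≤ 1 - t := sub_nonneg.2 ht₁
  refine ⟨?_, ?_⟩
  · calc ‖t • g + (1 - t) • c • m‖ ≤ t * ‖g‖ + (1 - t) * (c * ‖m‖) := by
          refine (norm_add_le _ _).trans_eq ?_
          rw [norm_smul, norm_smul, norm_smul, Real.norm_of_nonneg ht₀,
            Real.norm_of_nonneg ht₁, Real.norm_of_nonneg hc]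
      _ ≤ t * (L * ‖m‖) + (1 - t) * ((L - ρ) * ‖m‖) := by
          gcongr
          linarith
      _ = (L - (1 - t) * ρ) * ‖m‖ := by ring
  · calc (μ + (1 - t) * ρ) * ‖m‖ ^ 2 = t * (μ * ‖m‖ ^ 2) + (1 - t) * ((μ + ρ) * ‖m‖ ^ 2) := by
          ring
      _ ≤ t * ⟪g, m⟫ + (1 - t) * (c * ‖m‖ ^ 2) := by gcongr
      _ = ⟪t • g + (1 - t) • c • m, m⟫ := by
          simp only [inner_add_left, real_inner_smul_left, real_inner_self_eq_norm_sq]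

lemma mem_admissibleGradients_of_norm_sub_le (hL : 0 ≤ L)
    (hg : g ∈ admissibleGradients (μ + ρ) (L - ρ) n) (hm : ‖m - n‖ ≤ r) (hh : ‖h - g‖ ≤ r)
    (hr : r * (1 + 2 * L + 3 * |μ|) ≤ ρ * ‖n‖) : h ∈ admissibleGradients μ L m := by
  obtain ⟨hEB, hRSI⟩ := hg
  have hr₀ : 0 ≤ r := (norm_nonneg _).trans hm
  have hrμ : 0 ≤ r * |μ| := by positivity
  have hrL : 0 ≤ r * L := by positivity
  have hrn : r ≤ ‖n‖ := by
    refine le_of_mul_le_mul_right ?_ (by linarith : 0 < 1 + 2 * L)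
    nlinarith [norm_nonneg g, norm_nonneg n]
  have hmn : ‖m‖ ≤ ‖n‖ + r := (norm_le_norm_add_norm_sub' m n).trans (by gcongr)
  have hnm : ‖n‖ - r ≤ ‖m‖ := by
    linarith [norm_le_norm_add_norm_sub' n m, norm_sub_rev n m]
  have hhL : ‖h‖ ≤ L * ‖m‖ := calc
    ‖h‖ ≤ ‖g‖ + ‖h - g‖ := norm_le_norm_add_norm_sub' h g
    _ ≤ (L - ρ) * ‖n‖ + r := by gcongr
    _ ≤ L * (‖n‖ - r) := by linarith
    _ ≤ L * ‖m‖ := by gcongr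
  refine ⟨hhL, ?_⟩
  have hsplit : ⟪h, m⟫ = ⟪g, n⟫ + ⟪h - g, n⟫ + ⟪h, m - n⟫ := by
    rw [inner_sub_left, inner_sub_right]
    ring
  have hinner_sub : -(r * ‖n‖) ≤ ⟪h - g, n⟫ :=
    neg_le_of_abs_le ((abs_real_inner_le_norm _ _).trans (by gcongr))
  have hinner_h : -(L * (2 * ‖n‖) * r) ≤ ⟪h, m - n⟫ := by
    refine neg_le_of_abs_le ((abs_real_inner_le_norm _ _).trans ?_)
    have : ‖h‖ ≤ L * (2 * ‖n‖) := hhL.trans (by gcongr; linarith)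
    gcongr
  have hμm : μ * ‖m‖ ^ 2 ≤ μ * ‖n‖ ^ 2 + |μ| * (3 * r * ‖n‖) := by
    have hsq : |‖m‖ ^ 2 - ‖n‖ ^ 2| ≤ 3 * r * ‖n‖ := by
      rw [abs_le]
      constructor <;> nlinarith [norm_nonneg m, norm_nonneg n]
    have := (le_abs_self _).trans ((abs_mul μ _).trans_le
      (mul_le_mul_of_nonneg_left hsq (abs_nonneg μ)))
    linarith
  have hslack := mul_le_mul_of_nonneg_right hr (norm_nonneg n)
  linarith

lemma smul_add_mem_admissibleGradients {κ : ℝ} {v w : E}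
    (hv : c • n + v ∈ admissibleGradients μ L n) (hc : 0 ≤ c) (hμc : μ + ρ ≤ c) (hcL : c + ρ ≤ L)
    (hL : 0 ≤ L) (ht : t ∈ Icc (0 : ℝ) 1) (hm : ‖m - n‖ ≤ κ * (1 - t))
    (hw : ‖w - t • v‖ ≤ κ * (1 - t)) (hκ : κ * ((c + 1) * (1 + 2 * L + 3 * |μ|)) ≤ ρ * ‖n‖) :
    c • m + w ∈ admissibleGradients μ L m := by
  have ht₁ : 0 ≤ 1 - t := sub_nonneg.2 ht.2
  have hr : 0 ≤ κ * (1 - t) := (norm_nonneg _).trans hm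
  refine mem_admissibleGradients_of_norm_sub_le (r := (c + 1) * (κ * (1 - t))) hL
    (smul_add_smul_mem_admissibleGradients hv hc hμc hcL ht) ?_ ?_ ?_
  · exact hm.trans (le_mul_of_one_le_left hr (by linarith))
  · calc ‖c • m + w - (t • (c • n + v) + (1 - t) • c • n)‖
        = ‖c • (m - n) + (w - t • v)‖ := by congr 1; module
      _ ≤ c * (κ * (1 - t)) + κ * (1 - t) := by
        refine norm_add_le_of_le ?_ hw
        rw [norm_smul, Real.norm_of_nonneg hc]
        gcongr
      _ = (c + 1) * (κ * (1 - t)) := by ring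
  · calc (c + 1) * (κ * (1 - t)) * (1 + 2 * L + 3 * |μ|)
        = (1 - t) * (κ * ((c + 1) * (1 + 2 * L + 3 * |μ|))) := by ring
      _ ≤ (1 - t) * (ρ * ‖n‖) := by gcongr
      _ = (1 - t) * ρ * ‖n‖ := by ring

end AdmissibleGradients

section FunctionClass

variable {E : Type*} [NormedAddCommGroup E] [InnerProductSpace ℝ E] [CompleteSpace E]
  {μ L c : ℝ} {p : E → E} {X : Set E} {f F H : E → ℝ} {z : E}

/-- The set of global minimizers of `f`; `argminSet` for a function on a Hilbert space. -/
def minimizers (f : E → ℝ) : Set E := {z | ∀ y, f z ≤ f y}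

/-- The class `RSI⁻(μ) ∩ EB⁺(L)` of differentiable functions on a Hilbert space; `MemRSIEB` is
the case of `EuclideanSpace ℝ (Fin d)`. -/
structure IsRSIEB (μ L : ℝ) (f : E → ℝ) : Prop where
  differentiable : Differentiable ℝ f
  nonempty_minimizers : (minimizers f).Nonempty
  isClosed_minimizers : IsClosed (minimizers f)
  convex_minimizers : Convex ℝ (minimizers f)
  exists_isNearestPointMap : ∃ p, IsNearestPointMap p (minimizers f) ∧
    ∀ x, ∇ f x ∈ admissibleGradients μ L (x - p x)

lemma memRSIEB_iff {d : ℕ} {f : EuclideanSpace ℝ (Fin d) → ℝ} : MemRSIEB μ L f ↔ IsRSIEB μ L f :=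
  ⟨fun ⟨hf, hne, hclosed, hconvex, p, hp, hRSI, hEB⟩ =>
      ⟨hf, hne, hclosed, hconvex, p, hp, fun x => ⟨hEB x, hRSI x⟩⟩,
    fun ⟨hf, hne, hclosed, hconvex, p, hp, hgrad⟩ =>
      ⟨hf, hne, hclosed, hconvex, p, hp, fun x => (hgrad x).2, fun x => (hgrad x).1⟩⟩

lemma isRSIEB_zero (μ L : ℝ) : IsRSIEB μ L (fun _ : E => 0) := by
  have huniv : minimizers (fun _ : E => (0 : ℝ)) = univ := eq_univ_of_forall fun _ _ => le_rfl
  refine ⟨differentiable_const 0, ?_, ?_, ?_, id, fun x => ?_, fun x => ?_⟩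
  · exact huniv ▸ univ_nonempty
  · exact huniv ▸ isClosed_univ
  · exact huniv ▸ convex_univ
  · exact ⟨fun _ => le_rfl, fun y _ => by simp⟩
  · simp [admissibleGradients]

/-- The conditions at the point `z` for a function `f`, normalized to have minimum `0`, to belong to
`RSI⁻(μ) ∩ EB⁺(L)` with set of minimizers `X` and projection `p` onto `X`. They depend only on the
germ of `f` at `z`. -/
structure RSIEBAt (μ L : ℝ) (p : E → E) (X : Set E) (f : E → ℝ) (z : E) : Prop where
  differentiableAt : DifferentiableAt ℝ f z
  eq_zero : z ∈ X → f z = 0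
  pos : z ∉ X → 0 < f z
  gradient_mem : ∇ f z ∈ admissibleGradients μ L (z - p z)

lemma RSIEBAt.congr_of_eventuallyEq (hF : RSIEBAt μ L p X F z) (hf : f =ᶠ[𝓝 z] F) :
    RSIEBAt μ L p X f z where
  differentiableAt := hF.differentiableAt.congr_of_eventuallyEq hf
  eq_zero := hf.eq_of_nhds ▸ hF.eq_zero
  pos := hf.eq_of_nhds ▸ hF.pos
  gradient_mem := by
    rw [hf.gradient_eq]
    exact hF.gradient_mem

lemma isRSIEB_of_forall_rsiebAt (hp : IsNearestPointMap p X) (hclosed : IsClosed X)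
    (hconvex : Convex ℝ X) (hf : ∀ z, RSIEBAt μ L p X f z) : IsRSIEB μ L f := by
  have hmin : minimizers f = X := by
    ext z
    refine ⟨fun hz => ?_, fun hz y => ?_⟩
    · by_contra hzX
      exact ((hf z).pos hzX).not_ge ((hz (p z)).trans_eq ((hf _).eq_zero (hp z).1))
    · rw [(hf z).eq_zero hz]
      by_cases hy : y ∈ X
      · exact ((hf y).eq_zero hy).ge
      · exact ((hf y).pos hy).le
  exact ⟨fun z => (hf z).differentiableAt, hmin ▸ ⟨p 0, (hp 0).1⟩, hmin ▸ hclosed,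
    hmin ▸ hconvex, p, hmin ▸ hp, fun z => (hf z).gradient_mem⟩

/-- `c / 2` times the squared distance to the set onto which `p` projects. -/
def projQuadratic (c : ℝ) (p : E → E) (z : E) : ℝ := c / 2 * ‖z - p z‖ ^ 2

lemma hasGradientAt_projQuadratic (hp : IsNearestPointMap p X) (hX : Convex ℝ X) (c : ℝ) (z : E) :
    HasGradientAt (projQuadratic c p) (c • (z - p z)) z := by
  have h := hasGradientAt_const_mul (c / 2) (hp.hasGradientAt_norm_sub_sq hX z)
  rwa [smul_smul, div_mul_cancel₀ c two_ne_zero] at h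

lemma rsiebAt_projQuadratic (hp : IsNearestPointMap p X) (hX : Convex ℝ X) (hc : 0 < c)
    (hμc : μ ≤ c) (hcL : c ≤ L) (z : E) : RSIEBAt μ L p X (projQuadratic c p) z where
  differentiableAt := (hasGradientAt_projQuadratic hp hX c z).differentiableAt
  eq_zero hz := by simp [projQuadratic, hp.norm_sub_eq_zero_iff.2 hz]
  pos hz := by
    have := hp.norm_sub_eq_zero_iff.not.2 hz
    unfold projQuadratic
    positivity
  gradient_mem := by
    rw [(hasGradientAt_projQuadratic hp hX c z).gradient]
    exact smul_mem_admissibleGradients hc.le hμc hcL _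

lemma rsiebAt_projQuadratic_add (hp : IsNearestPointMap p X) (hX : Convex ℝ X)
    (hH : DifferentiableAt ℝ H z) (hlt : |H z| < projQuadratic c p z)
    (hgrad : c • (z - p z) + ∇ H z ∈ admissibleGradients μ L (z - p z)) :
    RSIEBAt μ L p X (fun y => projQuadratic c p y + H y) z := by
  have h := hasGradientAt_add (hasGradientAt_projQuadratic hp hX c z) hH.hasGradientAt
  refine ⟨h.differentiableAt, fun hz => ?_, fun _ => ?_, by rwa [h.gradient]⟩
  · rw [projQuadratic, hp.norm_sub_eq_zero_iff.2 hz] at hlt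
    simpa using (abs_nonneg _).trans_lt hlt
  · linarith [neg_abs_le (H z)]

end FunctionClass

section LocalInterpolation

variable {E : Type*} [NormedAddCommGroup E] [InnerProductSpace ℝ E]
  {μ L c : ℝ} {p : E → E} {X : Set E} {a g : E}

lemma eventually_mul_lt (A : ℝ) {B : ℝ} (hB : 0 < B) : ∀ᶠ κ in 𝓝[>] (0 : ℝ), κ * A < B :=
  nhdsWithin_le_nhds <|
    ((continuous_mul_const A).tendsto' 0 0 (zero_mul A)).eventually (gt_mem_nhds hB)

lemma lt_projQuadratic_of_norm_sub_le (hp : IsNearestPointMap p X) (hX : Convex ℝ X) (hc : 0 ≤ c)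
    {κ : ℝ} {z : E} (hz : ‖z - a‖ ≤ κ) (hκ : κ * 2 ≤ ‖a - p a‖)
    (hκ_sq : κ * 8 < c * ‖a - p a‖ ^ 2) : κ < projQuadratic c p z := by
  have hhalf : ‖a - p a‖ / 2 ≤ ‖z - p z‖ := by
    have h := norm_le_norm_add_norm_sub (z - p z) (a - p a)
    linarith [hp.norm_sub_sub_sub_le hX z a]
  calc κ < c / 2 * (‖a - p a‖ / 2) ^ 2 := by linarith
    _ ≤ c / 2 * ‖z - p z‖ ^ 2 := by gcongr

lemma eventually_exists_rsiebAt_gradient_eq [CompleteSpace E] (hp : IsNearestPointMap p X)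
    (hX : Convex ℝ X) (hc : 0 < c) (hμc : μ < c) (hcL : c < L)
    (hg : g ∈ admissibleGradients μ L (a - p a)) :
    ∀ᶠ κ in 𝓝[>] (0 : ℝ), ∃ F : E → ℝ, (∀ z, RSIEBAt μ L p X F z) ∧ ∇ F a = g ∧
      ∀ z, κ ≤ ‖z - a‖ → F z = projQuadratic c p z := by
  have hq := rsiebAt_projQuadratic hp hX hc hμc.le hcL.le
  have hgrad_q := fun z => hasGradientAt_projQuadratic hp hX c z
  rcases (norm_nonneg (a - p a)).eq_or_lt' with hD | hD
  · refine Eventually.of_forall fun κ => ⟨projQuadratic c p, hq, ?_, fun _ _ => rfl⟩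
    have hg₀ : ‖g‖ ≤ L * ‖a - p a‖ := hg.1
    rw [hD, mul_zero, norm_le_zero_iff] at hg₀
    rw [(hgrad_q a).gradient, norm_eq_zero.1 hD, smul_zero, hg₀]
  obtain ⟨ρ, hρ, hμρ, hρL⟩ : ∃ ρ, 0 < ρ ∧ μ + ρ ≤ c ∧ c + ρ ≤ L :=
    ⟨min (c - μ) (L - c), lt_min (sub_pos.2 hμc) (sub_pos.2 hcL),
      by linarith [min_le_left (c - μ) (L - c)], by linarith [min_le_right (c - μ) (L - c)]⟩
  filter_upwards [self_mem_nhdsWithin, eventually_mul_lt 2 hD,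
    eventually_mul_lt 8 (by positivity : 0 < c * ‖a - p a‖ ^ 2),
    eventually_mul_lt ((c + 1) * (1 + 2 * L + 3 * |μ|)) (mul_pos hρ hD)]
    with κ hκ hκD hκD_sq hκρ
  obtain ⟨H, hH, hHa, hH₀, hHκ⟩ := exists_bump_gradient_eq (g - c • (a - p a)) hκ a
  refine ⟨fun z => projQuadratic c p z + H z, fun z => ?_, ?_, fun z hz => by simp [hH₀ z hz]⟩
  · rcases le_or_gt ‖z - a‖ κ with hz | hz
    · obtain ⟨hHz, φ, hφ, hzφ, hgradφ⟩ := hHκ z hz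
      refine rsiebAt_projQuadratic_add hp hX (hH z) (hHz.trans_lt
        (lt_projQuadratic_of_norm_sub_le hp hX hc.le hz hκD.le hκD_sq)) ?_
      exact smul_add_mem_admissibleGradients (by rwa [add_sub_cancel]) hc.le hμρ hρL
        (hc.trans hcL).le hφ ((hp.norm_sub_sub_sub_le hX z a).trans hzφ) hgradφ hκρ.le
    · have hfar : ∀ᶠ y in 𝓝 z, κ < ‖y - a‖ :=
        (by fun_prop : Continuous fun y => ‖y - a‖).continuousAt.eventually (lt_mem_nhds hz)
      refine (hq z).congr_of_eventuallyEq (hfar.mono fun y hy => ?_)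
      simp only [hH₀ y hy.le, add_zero]
  · rw [(hasGradientAt_add (hgrad_q a) (hH a).hasGradientAt).gradient, hHa, add_sub_cancel]

end LocalInterpolation

section Gluing

lemma exists_forall_eventuallyEq {ι α β : Type*} [TopologicalSpace α] {S : ι → Set α}
    (hfin : LocallyFinite S) (hclosed : ∀ i, IsClosed (S i)) (hdisj : Pairwise (Disjoint on S))
    {F : ι → α → β} {f₀ : α → β} (hF : ∀ i, ∀ z ∉ S i, F i z = f₀ z) :
    ∃ f : α → β, (∀ i, ∀ z ∈ S i, f =ᶠ[𝓝 z] F i) ∧ ∀ z, (∀ i, z ∉ S i) → f =ᶠ[𝓝 z] f₀ := by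
  classical
  let f : α → β := fun z => if h : ∃ i, z ∈ S i then F h.choose z else f₀ z
  have hf : ∀ i, ∀ z ∈ S i, f z = F i z := fun i z hz => by
    have h : ∃ j, z ∈ S j := ⟨i, hz⟩
    have hi : h.choose = i := by
      by_contra hne
      exact disjoint_left.1 (hdisj hne) h.choose_spec hz
    simp only [f, dif_pos h, hi]
  have hf₀ : ∀ z, (∀ i, z ∉ S i) → f z = f₀ z := fun z hz =>
    dif_neg (not_exists.2 hz)
  refine ⟨f, fun i z hz => ?_, fun z hz => ?_⟩ <;>
    filter_upwards [hfin.iInter_compl_mem_nhds hclosed z] with y hy <;>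
    simp only [mem_iInter, mem_compl_iff] at hy
  · by_cases hyi : y ∈ S i
    · exact hf i y hyi
    · rw [hF i y hyi, hf₀ y fun j => ?_]
      rcases eq_or_ne i j with rfl | hij
      · exact hyi
      · exact hy j (disjoint_left.1 (hdisj hij) hz)
  · exact hf₀ y fun i => hy i (hz i)

lemma eventually_pairwise_disjoint_closedBall {ι α : Type*} [Finite ι] [MetricSpace α] {x : ι → α}
    (hx : Function.Injective x) :
    ∀ᶠ κ in 𝓝[>] (0 : ℝ), Pairwise (Disjoint on fun i => Metric.closedBall (x i) κ) := by
  refine eventually_all.2 fun i => eventually_all.2 fun j => ?_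
  by_cases hij : i = j
  · exact Eventually.of_forall fun _ hne => (hne hij).elim
  · filter_upwards [eventually_mul_lt 2 (dist_pos.2 (hx.ne hij))] with κ hκ _
    exact Metric.closedBall_disjoint_closedBall (by linarith)

end Gluing

section Interpolation

variable {E ι : Type*} [NormedAddCommGroup E] [InnerProductSpace ℝ E] [CompleteSpace E] [Finite ι]
  {μ L : ℝ} {p : E → E} {X : Set E} {x g : ι → E}

lemma exists_isRSIEB_gradient_eq_of_lt (hx : Function.Injective x) (hp : IsNearestPointMap p X)
    (hclosed : IsClosed X) (hconvex : Convex ℝ X) (hμL : μ < L) (hL : 0 < L)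
    (hg : ∀ i, g i ∈ admissibleGradients μ L (x i - p (x i))) :
    ∃ f, IsRSIEB μ L f ∧ ∀ i, ∇ f (x i) = g i := by
  obtain ⟨c, hc, hcL⟩ := exists_between (max_lt hμL hL)
  obtain ⟨hμc, hc₀⟩ := max_lt_iff.1 hc
  obtain ⟨κ, hκ, hdisj, hlocal⟩ := (eventually_mem_nhdsWithin.and
    ((eventually_pairwise_disjoint_closedBall hx).and (eventually_all.2 fun i =>
      eventually_exists_rsiebAt_gradient_eq hp hconvex hc₀ hμc hcL (hg i)))).exists
  choose F hF hFg hFq using hlocal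
  obtain ⟨f, hfF, hfq⟩ := exists_forall_eventuallyEq (locallyFinite_of_finite _)
    (fun i => Metric.isClosed_closedBall) hdisj fun i z hz =>
      hFq i z (not_le.1 (mt mem_closedBall_iff_norm.2 hz)).le
  refine ⟨f, isRSIEB_of_forall_rsiebAt hp hclosed hconvex fun z => ?_, fun i => ?_⟩
  · by_cases hz : ∃ i, z ∈ Metric.closedBall (x i) κ
    · obtain ⟨i, hi⟩ := hz
      exact (hF i z).congr_of_eventuallyEq (hfF i z hi)
    · exact (rsiebAt_projQuadratic hp hconvex hc₀ hμc.le hcL.le z).congr_of_eventuallyEq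
        (hfq z (not_exists.1 hz))
  · rw [(hfF i (x i) (Metric.mem_closedBall_self (le_of_lt hκ))).gradient_eq, hFg]

theorem stmt_7_general (hx : Function.Injective x) (μ L : ℝ) :
    (∃ f : E → ℝ, IsRSIEB μ L f ∧ ∀ i, ∇ f (x i) = g i) ↔
      ∃ X : Set E, X.Nonempty ∧ IsClosed X ∧ Convex ℝ X ∧ ∃ p, IsNearestPointMap p X ∧
        ∀ i, g i ∈ admissibleGradients μ L (x i - p (x i)) := by
  constructor
  · rintro ⟨f, ⟨-, hne, hclosed, hconvex, p, hp, hf⟩, hfg⟩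
    exact ⟨minimizers f, hne, hclosed, hconvex, p, hp, fun i => hfg i ▸ hf (x i)⟩
  rintro ⟨X, -, hclosed, hconvex, p, hp, hg⟩
  by_cases hdegenerate : L ≤ 0 ∨ L < μ
  · refine ⟨fun _ => 0, isRSIEB_zero μ L, fun i => ?_⟩
    rw [eq_zero_of_mem_admissibleGradients (hg i) hdegenerate, gradient_fun_const]
  obtain ⟨hL, hμL⟩ := not_or.1 hdegenerate
  rw [not_le] at hL
  rcases (not_lt.1 hμL).eq_or_lt with rfl | hμL
  · refine ⟨projQuadratic μ p, isRSIEB_of_forall_rsiebAt hp hclosed hconvex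
      (rsiebAt_projQuadratic hp hconvex hL le_rfl le_rfl), fun i => ?_⟩
    rw [(hasGradientAt_projQuadratic hp hconvex μ (x i)).gradient,
      eq_smul_of_mem_admissibleGradients hL.le (hg i)]
  · exact exists_isRSIEB_gradient_eq_of_lt hx hp hclosed hconvex hμL hL hg

end Interpolation

/-- Interpolation conditions for `RSI⁻(μ) ∩ EB⁺(L)` : a family of
points and gradients `(x i, g i)` with pairwise distinct points can be interpolated by a
function of the class iff there is a nonempty closed convex set `X*` such that each pair
satisfies the `RSI⁻(μ)` and `EB⁺(L)` inequalities relative to the projection onto `X*`. -/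
theorem stmt_7 {d : ℕ} (hd : 1 ≤ d) (n : ℕ)
    (x g : Fin (n + 1) → EuclideanSpace ℝ (Fin d))
    (hdist : Function.Injective x) :
    ∀ μ L : ℝ, 0 < μ → 0 < L →
      ((∃ f : EuclideanSpace ℝ (Fin d) → ℝ, MemRSIEB μ L f ∧
          ∀ i, gradient f (x i) = g i) ↔
        (∃ X : Set (EuclideanSpace ℝ (Fin d)), X.Nonempty ∧ IsClosed X ∧ Convex ℝ X ∧
          ∃ p, IsProjOn p X ∧ ∀ i,
            ‖g i‖ ≤ L * ‖x i - p (x i)‖ ∧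
            μ * ‖x i - p (x i)‖ ^ 2 ≤ ⟪g i, x i - p (x i)⟫)) := by
  intro μ L _ _
  simp only [memRSIEB_iff]
  exact stmt_7_general hdist μ L
end
end
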